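/- arXiv:1808.06313 — 5 statements merged into one kernel-verified Lean document; each statement's English description precedes it below -/
import Mathlib

section
/- Fix an integer r ≥ 1, and let D be the ℝ-derivation on the polynomial ring ℝ[X] determined by D(X) = X^{r+1} (corresponding to the context-free grammar G = {a → a^{r+1}}). Then for all natural numbers m ≥ 1 and n ≥ 0, D^n(X^m) = (∏_{j=0}^{n-1} (m + j·r)) · X^{m + n·r}. -/
open Polynomial Finset

section

variable {R A : Type*} [CommSemiring R] [CommSemiring A] [Algebra R A]
  {D : Derivation R A A} {a : A} {r : ℕ}

theorem derivation_pow_of_apply_eq_pow (hD : D a = a ^ (r + 1)) (m : ℕ) :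
    D (a ^ m) = m * a ^ (m + r) := by
  cases m with
  | zero => simp
  | succ k =>
    calc
      D (a ^ (k + 1)) = (k + 1) • a ^ k • D a := D.leibniz_pow a (k + 1)
      _ = ((k + 1 : ℕ) : A) * (a ^ k * a ^ (r + 1)) := by
        rw [hD, smul_eq_mul, nsmul_eq_mul]
      _ = ((k + 1 : ℕ) : A) * a ^ (k + 1 + r) := by ring

theorem iterate_derivation_pow_multifactorial_general (hD : D a = a ^ (r + 1)) (m n : ℕ) :
    D^[n] (a ^ m) = ((∏ j ∈ range n, (m + j * r) : ℕ) : A) * a ^ (m + n * r) := by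
  induction n with
  | zero => simp
  | succ n ih =>
    calc
      D^[n + 1] (a ^ m)
        = D (((∏ j ∈ range n, (m + j * r) : ℕ) : A) * a ^ (m + n * r)) := by
          rw [Function.iterate_succ_apply', ih]
      _ = ((∏ j ∈ range n, (m + j * r) : ℕ) : A) *
            (((m + n * r : ℕ) : A) * a ^ (m + n * r + r)) := by
          rw [← nsmul_eq_mul, map_nsmul, nsmul_eq_mul, derivation_pow_of_apply_eq_pow hD]
      _ = ((∏ j ∈ range (n + 1), (m + j * r) : ℕ) : A) * a ^ (m + (n + 1) * r) := by
          rw [prod_range_succ, Nat.cast_mul, mul_assoc, add_one_mul, add_assoc]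

end

/-- For the derivation on `ℝ[X]` with `D(X) = X^{r+1}` (grammar `{a → a^{r+1}}`),
`D^n(X^m) = (∏_{j=0}^{n-1} (m + j r)) · X^{m + n r}`. -/
theorem iterate_derivation_pow_multifactorial
    (r : ℕ) (hr : 1 ≤ r)
    (D : Derivation ℝ (Polynomial ℝ) (Polynomial ℝ))
    (hD : D (X : Polynomial ℝ) = X ^ (r + 1))
    (m n : ℕ) (hm : 1 ≤ m) :
    (⇑D)^[n] ((X : Polynomial ℝ) ^ m) =
      ((∏ j ∈ range n, (m + j * r) : ℕ) : Polynomial ℝ) * X ^ (m + n * r) :=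
  iterate_derivation_pow_multifactorial_general hD m n
end

section
/- For every natural number n, the double factorial identity (2n)!! = ∑_{k=0}^{n} C(n,k) · (2(n−k)−1)!! · (2k−1)!! holds, with the convention (−1)!! = 1 (equivalently, in ℕ with truncated subtraction, (2·0−1)!! = 0!! = 1). -/
open Finset Nat

/-!
The rising factorials of step `d`, `x (x + d) ⋯ (x + (n - 1) d)`, are of binomial type in `x`
(Chu–Vandermonde). For `d = 2` they are `(2n - 1)!!` at `x = 1` and `(2n)!!` at `x = 2 = 1 + 1`.
-/

theorem prod_range_add_add_mul_eq_sum_choose_mul {R : Type*} [CommSemiring R] (a b d : R) (n : ℕ) :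
    ∏ i ∈ range n, (a + b + d * i) =
      ∑ k ∈ range (n + 1),
        n.choose k * (∏ i ∈ range (n - k), (a + d * i)) * ∏ i ∈ range k, (b + d * i) := by
  induction n with
  | zero => simp
  | succ n ih =>
    have pascal := sum_choose_succ_mul
      (fun k j ↦ (∏ i ∈ range j, (a + d * i)) * ∏ i ∈ range k, (b + d * i)) n
    simp only [← mul_assoc] at pascal
    rw [prod_range_succ, ih, sum_mul, pascal, ← sum_add_distrib]
    refine sum_congr rfl fun k hk ↦ ?_
    have hkn : k ≤ n := mem_range_succ_iff.mp hk
    have split_last : a + b + d * n = (a + d * (n - k : ℕ)) + (b + d * k) := by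
      rw [add_add_add_comm, ← mul_add, ← Nat.cast_add, Nat.sub_add_cancel hkn]
    rw [split_last, Nat.sub_add_comm hkn, prod_range_succ, prod_range_succ]
    ring

theorem doubleFactorial_two_mul_sub_one_eq_prod (n : ℕ) :
    (2 * n - 1)‼ = ∏ i ∈ range n, (1 + 2 * i) := by
  induction n with
  | zero => rfl
  | succ n ih =>
    calc (2 * (n + 1) - 1)‼ = (2 * n + 1) * (2 * n - 1)‼ := doubleFactorial_add_one (2 * n)
      _ = ∏ i ∈ range (n + 1), (1 + 2 * i) := by
        rw [prod_range_succ, ih, mul_comm, add_comm (2 * n)]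

/-- Double factorial identity:
`(2n)!! = ∑_{k=0}^n C(n,k) (2(n−k)−1)!! (2k−1)!!`. -/
theorem doubleFactorial_identity (n : ℕ) :
    (2 * n)‼ = ∑ k ∈ range (n + 1), n.choose k * (2 * (n - k) - 1)‼ * (2 * k - 1)‼ := by
  calc (2 * n)‼ = ∏ i ∈ range n, (1 + 1 + 2 * i) := by
        rw [doubleFactorial_eq_prod_even]
        exact prod_congr rfl fun i _ ↦ by ring
    _ = ∑ k ∈ range (n + 1),
          n.choose k * (∏ i ∈ range (n - k), (1 + 2 * i)) * ∏ i ∈ range k, (1 + 2 * i) :=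
        prod_range_add_add_mul_eq_sum_choose_mul 1 1 2 n
    _ = ∑ k ∈ range (n + 1), n.choose k * (2 * (n - k) - 1)‼ * (2 * k - 1)‼ := by
        simp only [doubleFactorial_two_mul_sub_one_eq_prod]
end

section
/- Fix an integer r ≥ 1. Let a = X₀ and b = X₁ be the indeterminates of ℝ[a,b], let D₁ be the ℝ-derivation with D₁(a) = a, D₁(b) = b, and let D₂ be the ℝ-derivation with D₂(a) = a^r b, D₂(b) = a^{r−1} b². Define D₁₂ = D₁ ∘ D₂ (first apply D₂, then D₁). Then for all n ≥ 0, the n-th iterate satisfies D₁₂^n(a) = (∏_{j=0}^{n} (j·r + 1)) · (∏_{j=0}^{n−1} (j·r + 1)) · a^{n(r−1)+1} · b^n. (In multifactorial notation, the coefficient is (nr+1)!_r · ((n−1)r+1)!_r and the exponent of a is nr−(n−1).) -/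
open MvPolynomial Finset

/-!
With respect to `D₁` and `D₂` the elements `a` and `b` are eigenvectors for the same multiplier:
`D₁` multiplies both by `1`, and `D₂` multiplies both by `a ^ (r - 1) * b`. Such a derivation
multiplies a monomial of degree `k` by `k` times the multiplier, and the multiplier of `D₂` has
degree `r`. Hence `D₁ ∘ D₂` sends a monomial of degree `k` to `k * (k + r)` times a monomial of
degree `k + r`, and the degrees met along the iteration are `k, k + r, k + 2 * r, …`.
-/

section

variable {R A : Type*} [CommSemiring R] [CommSemiring A] [Algebra R A]

theorem derivation_pow_of_eq_mul (D : Derivation R A A) {x c : A} (hx : D x = c * x) (k : ℕ) :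
    D (x ^ k) = k • (c * x ^ k) := by
  cases k with
  | zero => simp
  | succ k =>
    rw [D.leibniz_pow, hx, Nat.add_sub_cancel, smul_eq_mul, mul_left_comm, ← pow_succ]

theorem derivation_pow_mul_pow_of_eq_mul (D : Derivation R A A) {x y c : A}
    (hx : D x = c * x) (hy : D y = c * y) (p q : ℕ) :
    D (x ^ p * y ^ q) = (p + q) • (c * (x ^ p * y ^ q)) := by
  rw [D.leibniz, derivation_pow_of_eq_mul D hx, derivation_pow_of_eq_mul D hy]
  simp only [smul_eq_mul, nsmul_eq_mul, Nat.cast_add]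
  ring

variable {r : ℕ} {D₁ D₂ : Derivation R A A} {x y : A}

theorem derivation_comp_pow_mul_pow (hr : 1 ≤ r) (h₁x : D₁ x = x) (h₁y : D₁ y = y)
    (h₂x : D₂ x = x ^ r * y) (h₂y : D₂ y = x ^ (r - 1) * y ^ 2) (p q : ℕ) :
    (D₁ ∘ D₂) (x ^ p * y ^ q) =
      ((p + q + r) * (p + q)) • (x ^ (p + (r - 1)) * y ^ (q + 1)) := by
  have h₂x' : D₂ x = x ^ (r - 1) * y * x := by
    rw [h₂x, mul_right_comm, pow_sub_one_mul (by lia)]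
  have h₂y' : D₂ y = x ^ (r - 1) * y * y := by rw [h₂y, sq, mul_assoc]
  have hD₁ := derivation_pow_mul_pow_of_eq_mul D₁ (c := 1) (by rw [h₁x, one_mul])
    (by rw [h₁y, one_mul])
  calc D₁ (D₂ (x ^ p * y ^ q))
      = D₁ ((p + q) • (x ^ (r - 1) * y * (x ^ p * y ^ q))) := by
        rw [derivation_pow_mul_pow_of_eq_mul D₂ h₂x' h₂y']
    _ = (p + q) • D₁ (x ^ (p + (r - 1)) * y ^ (q + 1)) := by
        rw [map_nsmul]
        congr 2
        ring
    _ = ((p + q + r) * (p + q)) • (x ^ (p + (r - 1)) * y ^ (q + 1)) := by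
        rw [hD₁, one_mul, smul_smul, mul_comm (p + q),
          show p + (r - 1) + (q + 1) = p + q + r by lia]

theorem D12_iterate_a_general (hr : 1 ≤ r) (h₁x : D₁ x = x) (h₁y : D₁ y = y)
    (h₂x : D₂ x = x ^ r * y) (h₂y : D₂ y = x ^ (r - 1) * y ^ 2) (p q n : ℕ) :
    (D₁ ∘ D₂)^[n] (x ^ p * y ^ q) =
      ((∏ j ∈ range n, (p + q + (j + 1) * r)) * ∏ j ∈ range n, (p + q + j * r)) •
        (x ^ (p + n * (r - 1)) * y ^ (q + n)) := by
  induction n with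
  | zero => simp
  | succ n ih =>
    have map_nsmul_comp (m : ℕ) (f : A) : (D₁ ∘ D₂) (m • f) = m • (D₁ ∘ D₂) f := by
      simp only [Function.comp_apply, map_nsmul]
    have degree_eq : p + n * (r - 1) + (q + n) = p + q + n * r := by
      obtain ⟨s, rfl⟩ := Nat.exists_eq_add_of_le' hr
      rw [Nat.add_sub_cancel]
      ring
    rw [Function.iterate_succ_apply', ih, map_nsmul_comp,
      derivation_comp_pow_mul_pow hr h₁x h₁y h₂x h₂y, smul_smul, degree_eq,
      prod_range_succ, prod_range_succ]
    congr 1 <;> ring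

end

/-- For `D₁₂ = D₁ ∘ D₂`,
`D₁₂^n(a) = (nr+1)!_r ((n−1)r+1)!_r a^{nr−(n−1)} b^n`. -/
theorem D12_iterate_a (r : ℕ) (hr : 1 ≤ r)
    (D₁ D₂ : Derivation ℝ (MvPolynomial (Fin 2) ℝ) (MvPolynomial (Fin 2) ℝ))
    (h1a : D₁ (X 0) = X 0) (h1b : D₁ (X 1) = X 1)
    (h2a : D₂ (X 0) = X 0 ^ r * X 1) (h2b : D₂ (X 1) = X 0 ^ (r - 1) * X 1 ^ 2)
    (n : ℕ) :
    (⇑D₁ ∘ ⇑D₂)^[n] (X 0 : MvPolynomial (Fin 2) ℝ) =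
      ((∏ j ∈ range (n + 1), (j * r + 1) : ℕ) : MvPolynomial (Fin 2) ℝ) *
        ((∏ j ∈ range n, (j * r + 1) : ℕ) : MvPolynomial (Fin 2) ℝ) *
        (X 0 ^ (n * (r - 1) + 1) * X 1 ^ n) := by
  simpa [prod_range_succ', add_comm] using D12_iterate_a_general hr h1a h1b h2a h2b 1 0 n
end

section
/- Fix an integer r ≥ 1. Let a = X₀ and b = X₁ be the indeterminates of ℝ[a,b], let D₁ be the ℝ-derivation with D₁(a) = a, D₁(b) = b, and let D₂ be the ℝ-derivation with D₂(a) = a^r b, D₂(b) = a^{r−1} b². Define D₂₁ = D₂ ∘ D₁ (first apply D₁, then D₂). Then for all n ≥ 0, D₂₁^n(a) = (∏_{j=0}^{n−1} (j·r + 1))² · a^{n(r−1)+1} · b^n. (In multifactorial notation, the coefficient is (((n−1)r+1)!_r)² and the exponent of a is nr−(n−1).) -/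
open MvPolynomial Finset

/-!
Put `c = a ^ (r - 1) * b`. Then `D₁ a = a`, `D₁ c = r c`, `D₂ a = c a` and `D₂ c = r c²`, so
`D₁` multiplies `cⁿ a` by `n r + 1`, while `D₂` multiplies it by `(n r + 1) c`. Hence
`D₂ ∘ D₁` sends `cⁿ a` to `(n r + 1)² cⁿ⁺¹ a`.
-/

section

variable {R A : Type*} [CommSemiring R] [CommSemiring A] [Algebra R A]

theorem derivation_pow_mul_of_eq_smul_mul (D : Derivation R A A) {u c x : A} {p q : R}
    (hc : D c = q • (u * c)) (hx : D x = p • (u * x)) (n : ℕ) :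
    D (c ^ n * x) = (n * q + p) • (u * (c ^ n * x)) := by
  induction n with
  | zero => simp [hx]
  | succ n ih =>
    rw [pow_succ', mul_assoc, D.leibniz, ih, hc]
    simp only [smul_eq_mul, Algebra.smul_def, map_add, map_mul, map_natCast]
    push_cast
    ring

theorem derivation_pow_mul_of_eq_smul (D : Derivation R A A) {c x : A} {p q : R}
    (hc : D c = q • c) (hx : D x = p • x) (n : ℕ) :
    D (c ^ n * x) = (n * q + p) • (c ^ n * x) := by
  simpa only [one_mul] using
    derivation_pow_mul_of_eq_smul_mul D (u := 1) (by rwa [one_mul]) (by rwa [one_mul]) n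

theorem derivation_comp_iterate_of_eq_smul_mul (D₁ D₂ : Derivation R A A) {c x : A} {p q : R}
    (h₁c : D₁ c = q • c) (h₁x : D₁ x = p • x)
    (h₂c : D₂ c = q • (c * c)) (h₂x : D₂ x = p • (c * x)) (n : ℕ) :
    (⇑D₂ ∘ ⇑D₁)^[n] x = (∏ j ∈ range n, (j * q + p)) ^ 2 • (c ^ n * x) := by
  induction n with
  | zero => simp
  | succ n ih =>
    have hD₂ : D₂ (c ^ n * x) = (n * q + p) • (c ^ (n + 1) * x) := by
      rw [derivation_pow_mul_of_eq_smul_mul D₂ h₂c h₂x, pow_succ', mul_assoc]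
    rw [Function.iterate_succ_apply', ih, Function.comp_apply, D₁.map_smul,
      derivation_pow_mul_of_eq_smul D₁ h₁c h₁x, D₂.map_smul, D₂.map_smul, hD₂, smul_smul,
      smul_smul, prod_range_succ, mul_pow, sq (n * q + p : R), mul_assoc]

theorem D21_iterate_a_general (r : ℕ) (hr : 1 ≤ r) (D₁ D₂ : Derivation R A A) {a b : A}
    (h1a : D₁ a = a) (h1b : D₁ b = b)
    (h2a : D₂ a = a ^ r * b) (h2b : D₂ b = a ^ (r - 1) * b ^ 2) (n : ℕ) :
    (⇑D₂ ∘ ⇑D₁)^[n] a =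
      (((∏ j ∈ range n, (j * r + 1)) ^ 2 : ℕ) : A) * (a ^ (n * (r - 1) + 1) * b ^ n) := by
  obtain ⟨s, rfl⟩ := Nat.exists_eq_add_of_le' hr
  rw [Nat.add_sub_cancel] at h2b ⊢
  set c := a ^ s * b with hc
  have h₁a : D₁ a = (1 : R) • a := by rw [h1a, one_smul]
  have h₁b : D₁ b = (1 : R) • b := by rw [h1b, one_smul]
  have h₂a : D₂ a = (1 : R) • (c * a) := by rw [h2a, one_smul, hc]; ring
  have h₂b : D₂ b = (1 : R) • (c * b) := by rw [h2b, one_smul, hc]; ring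
  have h₁c : D₁ c = ((s + 1 : ℕ) : R) • c := by
    rw [hc, derivation_pow_mul_of_eq_smul D₁ h₁a h₁b, mul_one, Nat.cast_succ]
  have h₂c : D₂ c = ((s + 1 : ℕ) : R) • (c * c) := by
    nth_rw 1 [hc]
    rw [derivation_pow_mul_of_eq_smul_mul D₂ h₂a h₂b, mul_one, Nat.cast_succ]
  have hcn : c ^ n * a = a ^ (n * s + 1) * b ^ n := by rw [hc]; ring
  rw [derivation_comp_iterate_of_eq_smul_mul D₁ D₂ h₁c h₁a h₂c h₂a, hcn, Algebra.smul_def]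
  simp

end

/-- For `D₂₁ = D₂ ∘ D₁`,
`D₂₁^n(a) = (((n−1)r+1)!_r)² a^{nr−(n−1)} b^n`. -/
theorem D21_iterate_a (r : ℕ) (hr : 1 ≤ r)
    (D₁ D₂ : Derivation ℝ (MvPolynomial (Fin 2) ℝ) (MvPolynomial (Fin 2) ℝ))
    (h1a : D₁ (X 0) = X 0) (h1b : D₁ (X 1) = X 1)
    (h2a : D₂ (X 0) = X 0 ^ r * X 1) (h2b : D₂ (X 1) = X 0 ^ (r - 1) * X 1 ^ 2)
    (n : ℕ) :
    (⇑D₂ ∘ ⇑D₁)^[n] (X 0 : MvPolynomial (Fin 2) ℝ) =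
      (((∏ j ∈ range n, (j * r + 1)) ^ 2 : ℕ) : MvPolynomial (Fin 2) ℝ) *
        (X 0 ^ (n * (r - 1) + 1) * X 1 ^ n) :=
  D21_iterate_a_general r hr D₁ D₂ h1a h1b h2a h2b n
end

section
/- Fix an integer r ≥ 1. Let a = X₀ and b = X₁ be the indeterminates of ℝ[a,b], let D₁ be the ℝ-derivation with D₁(a) = a, D₁(b) = b, and let D₂ be the ℝ-derivation with D₂(a) = a^r b, D₂(b) = a^{r−1} b². Define D₂₁ = D₂ ∘ D₁ (first apply D₁, then D₂). Then for all n ≥ 0, D₂₁^n(b) = (∏_{j=0}^{n−1} (j·r + 1))² · a^{n(r−1)} · b^{n+1}. (In multifactorial notation, the coefficient is (((n−1)r+1)!_r)² and the exponent of a is nr−n.) -/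
open MvPolynomial Finset

/- Put `c = a ^ (r - 1) * b`. Then `D₁ a = a`, `D₁ b = b`, `D₂ a = c * a` and `D₂ b = c * b`, so by
the Leibniz rule both derivations multiply a monomial by its total degree, and `D₂` also by `c`.
Since `c` has degree `r`, the monomial `c ^ j * b` has degree `j * r + 1`, and `D₂ ∘ D₁` sends it to
`(j * r + 1) ^ 2 * (c ^ (j + 1) * b)`. -/

/-- `x` is a Darboux element of the derivation `D` with cofactor `d • u`. The factor `u` is kept
apart from the scalar `d`, which is the weight of `x`: for fixed `D` and `u`, weights add under
multiplication. -/
def IsDarboux {R A : Type*} [CommSemiring R] [CommSemiring A] [Algebra R A]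
    (D : Derivation R A A) (u : A) (d : R) (x : A) : Prop :=
  D x = d • (u * x)

namespace IsDarboux

variable {R A : Type*} [CommSemiring R] [CommSemiring A] [Algebra R A]
  {D D₁ D₂ : Derivation R A A} {u a b c x y : A} {d e w : R}

theorem mul (hx : IsDarboux D u d x) (hy : IsDarboux D u e y) :
    IsDarboux D u (d + e) (x * y) := by
  unfold IsDarboux at *
  simp only [D.leibniz, hx, hy, smul_eq_mul, Algebra.smul_def, map_add]
  ring

theorem pow (hx : IsDarboux D u d x) (n : ℕ) : IsDarboux D u (n * d) (x ^ n) := by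
  induction n with
  | zero => simp [IsDarboux]
  | succ n ih => simpa only [pow_succ, Nat.cast_succ, add_one_mul] using ih.mul hx

theorem pow_mul_pow (ha : IsDarboux D u 1 a) (hb : IsDarboux D u 1 b) (p q : ℕ) :
    IsDarboux D u ((p + q : ℕ) : R) (a ^ p * b ^ q) := by
  simpa only [mul_one, Nat.cast_add] using (ha.pow p).mul (hb.pow q)

theorem iterate_comp (hc₁ : IsDarboux D₁ 1 w c) (hc₂ : IsDarboux D₂ c w c)
    (hx₁ : IsDarboux D₁ 1 d x) (hx₂ : IsDarboux D₂ c d x) (n : ℕ) :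
    (⇑D₂ ∘ ⇑D₁)^[n] x = (∏ j ∈ range n, (j * w + d)) ^ 2 • (c ^ n * x) := by
  induction n with
  | zero => simp
  | succ n ih =>
    have apply₁ : D₁ (c ^ n * x) = (n * w + d) • (1 * (c ^ n * x)) := (hc₁.pow n).mul hx₁
    have apply₂ : D₂ (c ^ n * x) = (n * w + d) • (c * (c ^ n * x)) := (hc₂.pow n).mul hx₂
    calc (⇑D₂ ∘ ⇑D₁)^[n + 1] x
        = D₂ (D₁ ((∏ j ∈ range n, (j * w + d)) ^ 2 • (c ^ n * x))) := by
          rw [Function.iterate_succ_apply', ih, Function.comp_apply]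
      _ = ((∏ j ∈ range n, (j * w + d)) ^ 2 * (n * w + d) ^ 2) • (c * (c ^ n * x)) := by
          rw [D₁.map_smul, apply₁, one_mul, D₂.map_smul, D₂.map_smul, apply₂, smul_smul, smul_smul,
            mul_assoc, ← sq]
      _ = (∏ j ∈ range (n + 1), (j * w + d)) ^ 2 • (c ^ (n + 1) * x) := by
          rw [prod_range_succ, mul_pow, pow_succ' c, mul_assoc]

end IsDarboux

theorem D21_iterate_b_general {R A : Type*} [CommSemiring R] [CommSemiring A] [Algebra R A]
    {r : ℕ} (hr : 1 ≤ r) {D₁ D₂ : Derivation R A A} {a b : A}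
    (h1a : D₁ a = a) (h1b : D₁ b = b)
    (h2a : D₂ a = a ^ r * b) (h2b : D₂ b = a ^ (r - 1) * b ^ 2) (p q n : ℕ) :
    (⇑D₂ ∘ ⇑D₁)^[n] (a ^ p * b ^ q) =
      (((∏ j ∈ range n, (j * r + (p + q))) ^ 2 : ℕ) : A) *
        (a ^ (n * (r - 1) + p) * b ^ (n + q)) := by
  obtain ⟨s, rfl⟩ := Nat.exists_eq_add_of_le' hr
  rw [Nat.add_sub_cancel] at h2b ⊢
  have ha₁ : IsDarboux D₁ 1 (1 : R) a := by rw [IsDarboux, h1a, one_smul, one_mul]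
  have hb₁ : IsDarboux D₁ 1 (1 : R) b := by rw [IsDarboux, h1b, one_smul, one_mul]
  have ha₂ : IsDarboux D₂ (a ^ s * b) (1 : R) a := by rw [IsDarboux, h2a, one_smul]; ring
  have hb₂ : IsDarboux D₂ (a ^ s * b) (1 : R) b := by rw [IsDarboux, h2b, one_smul]; ring
  have hc₁ : IsDarboux D₁ 1 ((s + 1 : ℕ) : R) (a ^ s * b) := by
    simpa only [pow_one] using ha₁.pow_mul_pow hb₁ s 1
  have hc₂ : IsDarboux D₂ (a ^ s * b) ((s + 1 : ℕ) : R) (a ^ s * b) := by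
    simpa only [pow_one] using ha₂.pow_mul_pow hb₂ s 1
  calc (⇑D₂ ∘ ⇑D₁)^[n] (a ^ p * b ^ q)
      = (∏ j ∈ range n, ((j : R) * (s + 1 : ℕ) + (p + q : ℕ))) ^ 2 •
          ((a ^ s * b) ^ n * (a ^ p * b ^ q)) :=
        hc₁.iterate_comp hc₂ (ha₁.pow_mul_pow hb₁ p q) (ha₂.pow_mul_pow hb₂ p q) n
    _ = (((∏ j ∈ range n, (j * (s + 1) + (p + q))) ^ 2 : ℕ) : A) *
          ((a ^ s * b) ^ n * (a ^ p * b ^ q)) := by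
        rw [← nsmul_eq_mul, ← Nat.cast_smul_eq_nsmul R]
        norm_cast
    _ = (((∏ j ∈ range n, (j * (s + 1) + (p + q))) ^ 2 : ℕ) : A) *
          (a ^ (n * s + p) * b ^ (n + q)) := by ring

/-- For `D₂₁ = D₂ ∘ D₁`,
`D₂₁^n(b) = (((n−1)r+1)!_r)² a^{nr−n} b^{n+1}`. -/
theorem D21_iterate_b (r : ℕ) (hr : 1 ≤ r)
    (D₁ D₂ : Derivation ℝ (MvPolynomial (Fin 2) ℝ) (MvPolynomial (Fin 2) ℝ))
    (h1a : D₁ (X 0) = X 0) (h1b : D₁ (X 1) = X 1)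
    (h2a : D₂ (X 0) = X 0 ^ r * X 1) (h2b : D₂ (X 1) = X 0 ^ (r - 1) * X 1 ^ 2)
    (n : ℕ) :
    (⇑D₂ ∘ ⇑D₁)^[n] (X 1 : MvPolynomial (Fin 2) ℝ) =
      (((∏ j ∈ range n, (j * r + 1)) ^ 2 : ℕ) : MvPolynomial (Fin 2) ℝ) *
        (X 0 ^ (n * (r - 1)) * X 1 ^ (n + 1)) := by
  simpa using D21_iterate_b_general hr h1a h1b h2a h2b 0 1 n
end
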